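/- There is a universal constant C > 0 such that the following holds. Let (X,d) be a metric space with doubling dimension at most k, equipped with hierarchical nets {N_i}_{i∈[L]} with parameter s ≥ 4 and net-respecting parameter ε ∈ (0,1). Let W = (T, π) be a prize-collecting instance with finite terminal set T ⊆ X and penalties π : T → [0,∞), and let F be a minimum-cost net-respecting solution for W (a finite connected multigraph with vertices in X, which is additionally Eulerian in the PCTSP case, with cost c_W(F) = w(F) + Σ_{v ∈ T∖V(F)} π(v)). Then for every i ∈ [L], every u ∈ N_i, every t ≥ 1, and every net-respecting feasible solution G of the sub-instance W_u^{(i,t+1)} whose terminal set is T ∩ B(u,(t+1)s^i) with the same penalties π, one has w(F|_{B(u, t s^i)}) ≤ c_{W_u^{(i,t+1)}}(G) + (C·s·k·t/ε)^{C·k} · s^i, where F|_B denotes the set of edges of F with both endpoints in B and w denotes total edge weight. -/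

import Mathlib

open scoped Classical

/-- The weight of an (undirected) edge, given by the metric. -/
noncomputable def edgeLen {X : Type*} [MetricSpace X] : Sym2 X → ℝ :=
  Sym2.lift ⟨fun x y => dist x y, fun x y => dist_comm x y⟩

/-- The vertex set covered by a multiset of edges. -/
def mVerts {X : Type*} (F : Multiset (Sym2 X)) : Set X := {x | ∃ e ∈ F, x ∈ e}

/-- The total edge weight of a multiset of edges (with multiplicity). -/
noncomputable def mWeight {X : Type*} [MetricSpace X] (F : Multiset (Sym2 X)) : ℝ :=
  (F.map edgeLen).sum

/-- The simple graph induced by a multiset of edges. -/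
def mGraph {X : Type*} (F : Multiset (Sym2 X)) : SimpleGraph X :=
  SimpleGraph.fromEdgeSet {e | e ∈ F}

/-- The multigraph `F` is connected on the vertices it covers. -/
def MConnected {X : Type*} (F : Multiset (Sym2 X)) : Prop :=
  ∀ x ∈ mVerts F, ∀ y ∈ mVerts F, (mGraph F).Reachable x y

/-- The degree of `v` in the edge multiset `F` (self-loops count twice). -/
noncomputable def mDegree {X : Type*} (F : Multiset (Sym2 X)) (v : X) : ℕ :=
  (F.filter (fun e => v ∈ e)).card + (F.filter (fun e => e = s(v, v))).card

/-- `F` is Eulerian: every covered vertex has even degree. -/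
def MEulerian {X : Type*} (F : Multiset (Sym2 X)) : Prop :=
  ∀ v ∈ mVerts F, Even (mDegree F v)

/-- `F` is net-respecting w.r.t. the hierarchical nets `N` and parameter `ε`. -/
def MNetRespecting {X : Type*} [MetricSpace X] (N : ℕ → Set X) (sc ε : ℝ)
    (F : Multiset (Sym2 X)) : Prop :=
  ∀ x y : X, s(x, y) ∈ F → ∀ i : ℕ,
    sc ^ i ≤ ε * dist x y → ε * dist x y < sc ^ (i + 1) → x ∈ N i ∧ y ∈ N i

/-- The prize-collecting cost of `F` for terminals `T` with penalties `π`: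
edge weight plus penalties of uncovered terminals. -/
noncomputable def pcCost {X : Type*} [MetricSpace X] (T : Finset X) (π : X → ℝ)
    (F : Multiset (Sym2 X)) : ℝ :=
  mWeight F + ∑ v ∈ T.filter (fun v => v ∉ mVerts F), π v

/-- The edges of `F` with both endpoints in the closed ball `B(u,r)`. -/
noncomputable def restrictBall {X : Type*} [MetricSpace X] (F : Multiset (Sym2 X))
    (u : X) (r : ℝ) : Multiset (Sym2 X) :=
  F.filter (fun e => ∀ x ∈ e, x ∈ Metric.closedBall u r)

/-!
Write `A r` for the weight of `F` inside `B(u, r)`. Averaging over the radii in `[r, r + ℓ]` gives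
a sphere crossed by at most `(A (r + 2ℓ) - A r) / ℓ` edges of `F` of length at most `ℓ`. Remove
from `F` the edges inside this sphere, and also the edges longer than `ℓ` inside a ball of radius
`R ≈ t s ^ i / ε`. A vertex shared with the remaining edges is an endpoint of a short crossing edge
or of a removed long edge, or it has an edge leaving the larger ball and hence lies in `N i`; by
packing there are few points of the last kind. A net-respecting network `Q` joins these vertices to
one another and to `G`: cover the larger ball by balls of radius `ρ ≈ ℓ / s`, connect their centres
to `u`, and connect each vertex to a centre. Then `G`, `Q` and a `T`-join inside `Q` that restores
the degree parities replace the removed edges, and optimality of `F` yields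
`A r ≤ c(G) + (A (r + 2ℓ) - A r) / 4 + D / ℓ ^ k`, the removed long edges paying for their own
attachment to `Q`.

Iterating over shells whose widths shrink by the factor `1 - 1 / (2k)`, the recurrence contracts
by `5` in each step while the error term at most doubles, and `A` is bounded, so only a multiple of
the first error term remains.
-/

section Multigraph

variable {X : Type*} {F G Q : Multiset (Sym2 X)} {x y p v : X}

lemma mem_mVerts_of_mem {e : Sym2 X} (he : e ∈ F) (hv : v ∈ e) : v ∈ mVerts F := ⟨e, he, hv⟩

@[simp]
lemma mVerts_zero : mVerts (0 : Multiset (Sym2 X)) = ∅ := by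
  simp [mVerts]

@[simp]
lemma mVerts_add (F G : Multiset (Sym2 X)) : mVerts (F + G) = mVerts F ∪ mVerts G := by
  ext
  simp [mVerts, or_and_right, exists_or]

lemma mVerts_mono (h : F ≤ G) : mVerts F ⊆ mVerts G :=
  fun _ ⟨_, he, hv⟩ => mem_mVerts_of_mem (Multiset.mem_of_le h he) hv

@[simp]
lemma mVerts_singleton (x y : X) : mVerts {s(x, y)} = {x, y} := by
  ext
  simp [mVerts]

lemma mVerts_eq_empty : mVerts F = ∅ ↔ F = 0 := by
  refine ⟨fun h => Multiset.eq_zero_of_forall_notMem fun e he => ?_, fun h => h ▸ mVerts_zero⟩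
  induction e with | _ x y =>
  exact Set.notMem_empty x (h ▸ mem_mVerts_of_mem he (Sym2.mem_mk_left x y))

/-- The vertices covered by `F`, as a `Finset`. -/
noncomputable def vertexFinset (F : Multiset (Sym2 X)) : Finset X :=
  F.toFinset.biUnion Sym2.toFinset

@[simp]
lemma mem_vertexFinset : v ∈ vertexFinset F ↔ v ∈ mVerts F := by
  simp [vertexFinset, mVerts]

lemma card_vertexFinset_le (F : Multiset (Sym2 X)) : (vertexFinset F).card ≤ F.card * 2 := by
  refine (Finset.card_biUnion_le_card_mul _ _ 2 fun e _ => ?_).trans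
    (Nat.mul_le_mul_right 2 (Multiset.toFinset_card_le F))
  rw [Sym2.card_toFinset]
  split_ifs <;> omega

lemma mGraph_adj : (mGraph F).Adj x y ↔ s(x, y) ∈ F ∧ x ≠ y :=
  SimpleGraph.fromEdgeSet_adj _

lemma mGraph_mono (h : F ≤ G) : mGraph F ≤ mGraph G :=
  SimpleGraph.fromEdgeSet_mono fun _ => Multiset.mem_of_le h

namespace MConnected

lemma zero : MConnected (0 : Multiset (Sym2 X)) := by
  simp [MConnected]

lemma singleton (x y : X) : MConnected {s(x, y)} := by
  have hxy : (mGraph {s(x, y)}).Reachable x y := by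
    by_cases h : x = y
    · exact h ▸ .rfl
    · exact (mGraph_adj.2 ⟨Multiset.mem_singleton_self _, h⟩).reachable
  simp [MConnected, hxy, hxy.symm]

lemma of_reachable_le (hQ : MConnected Q) (hQF : Q ≤ F)
    (h : ∀ v ∈ mVerts F, ∃ q ∈ mVerts Q, (mGraph F).Reachable v q) : MConnected F := by
  intro x hx y hy
  obtain ⟨p, hp, hxp⟩ := h x hx
  obtain ⟨q, hq, hyq⟩ := h y hy
  exact hxp.trans (((hQ p hp q hq).mono (mGraph_mono hQF)).trans hyq.symm)

lemma add (hF : MConnected F) (hG : MConnected G) (hpF : p ∈ mVerts F) (hpG : p ∈ mVerts G) :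
    MConnected (F + G) := by
  refine hF.of_reachable_le (Multiset.le_add_right F G) fun v hv => ?_
  rw [mVerts_add] at hv
  rcases hv with hv | hv
  · exact ⟨v, hv, .rfl⟩
  · exact ⟨p, hpF, (hG v hv p hpG).mono (mGraph_mono (Multiset.le_add_left G F))⟩

lemma exists_reachable_mem_inter {R E : Multiset (Sym2 X)} (h : MConnected (R + E))
    (hR : (mVerts R).Nonempty) (hv : v ∈ mVerts E) :
    ∃ q ∈ mVerts R ∩ mVerts E, (mGraph E).Reachable v q := by
  obtain ⟨r, hr⟩ := hR
  obtain ⟨p⟩ := h v (by simp [hv]) r (by simp [hr])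
  induction p with
  | nil => exact ⟨_, ⟨hr, hv⟩, .rfl⟩
  | @cons a b _ hab _ ih =>
    by_cases ha : a ∈ mVerts R
    · exact ⟨a, ⟨ha, hv⟩, .rfl⟩
    obtain ⟨hmem, hne⟩ := mGraph_adj.1 hab
    have hE : s(a, b) ∈ E := (Multiset.mem_add.1 hmem).resolve_left fun h =>
      ha (mem_mVerts_of_mem h (Sym2.mem_mk_left a b))
    obtain ⟨q, hq, hbq⟩ := ih (mem_mVerts_of_mem hE (Sym2.mem_mk_right a b)) hr
    exact ⟨q, hq, (mGraph_adj.2 ⟨hE, hne⟩).reachable.trans hbq⟩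

end MConnected

end Multigraph

section Parity

variable {X : Type*} {F G Q : Multiset (Sym2 X)} {x y v : X}

/-- The sum over `ZMod 2` of the two endpoints of an edge (zero for a loop). -/
noncomputable def edgeParity : Sym2 X → X →₀ ZMod 2 :=
  Sym2.lift ⟨fun x y => .single x 1 + .single y 1, fun _ _ => add_comm _ _⟩

/-- The function sending each vertex to the parity of its degree, that is, the boundary of a
multigraph regarded as a `1`-chain over `ZMod 2`. -/
noncomputable def degreeParity : Multiset (Sym2 X) →+ (X →₀ ZMod 2) :=
  Multiset.sumAddMonoidHom.comp (Multiset.mapAddMonoidHom edgeParity)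

lemma degreeParity_cons (x y : X) (F : Multiset (Sym2 X)) :
    degreeParity (s(x, y) ::ₘ F) = .single x 1 + .single y 1 + degreeParity F := by
  simp [degreeParity, edgeParity]

lemma degreeParity_apply (F : Multiset (Sym2 X)) (v : X) :
    degreeParity F v = (mDegree F v : ZMod 2) := by
  induction F using Multiset.induction_on with
  | empty => simp [mDegree]
  | cons e F ih =>
    induction e with | _ x y =>
    rw [degreeParity_cons, Finsupp.add_apply, Finsupp.add_apply, ih]
    simp only [mDegree, Multiset.filter_cons, Finsupp.single_apply]
    by_cases hx : v = x <;> by_cases hy : v = y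
    · subst hx hy
      simp
      ring
    · subst hx
      simp [Ne.symm hy]
      ring
    · subst hy
      simp [Ne.symm hx]
      ring
    · simp [hx, hy, Ne.symm hx, Ne.symm hy]

lemma degreeParity_apply_of_notMem (h : v ∉ mVerts F) : degreeParity F v = 0 := by
  have not_incident (e) (he : e ∈ F) : v ∉ e := fun hv => h (mem_mVerts_of_mem he hv)
  rw [degreeParity_apply, mDegree, Multiset.filter_eq_nil.2 not_incident, Multiset.filter_eq_nil.2]
  · simp
  · rintro e he rfl
    exact not_incident _ he (Sym2.mem_mk_left v v)

lemma mEulerian_iff_degreeParity_eq_zero : MEulerian F ↔ degreeParity F = 0 := by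
  refine ⟨fun h => Finsupp.ext fun v => ?_, fun h v _ => ?_⟩
  · by_cases hv : v ∈ mVerts F
    · rw [degreeParity_apply, ZMod.natCast_eq_zero_iff_even.2 (h v hv), Finsupp.zero_apply]
    · rw [degreeParity_apply_of_notMem hv, Finsupp.zero_apply]
  · rw [← ZMod.natCast_eq_zero_iff_even, ← degreeParity_apply, h, Finsupp.zero_apply]

lemma degree_degreeParity (F : Multiset (Sym2 X)) : (degreeParity F).degree = 0 := by
  induction F using Multiset.induction_on with
  | empty => simp
  | cons e F ih =>
    induction e with | _ x y =>
    simp [degreeParity_cons, ih, CharTwo.add_self_eq_zero]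

lemma degreeParity_edges {H : SimpleGraph X} (p : H.Walk x y) :
    degreeParity (p.edges : Multiset (Sym2 X)) = .single x 1 + .single y 1 := by
  induction p with
  | nil => exact (ZModModule.add_self _).symm
  | cons _ p ih =>
    rw [SimpleGraph.Walk.edges_cons, ← Multiset.cons_coe, degreeParity_cons, ih,
      ZModModule.add_add_add_cancel]

lemma exists_le_degreeParity_eq {J : Multiset (Sym2 X)} (hJ : ∀ e ∈ J, e ∈ Q) :
    ∃ J' ≤ Q, degreeParity J' = degreeParity J := by
  refine ⟨(J.toFinset.filter fun e => Odd (J.count e)).val, ?_, ?_⟩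
  · refine (Multiset.le_iff_subset (Finset.nodup _)).2 fun e he => hJ e ?_
    exact Multiset.mem_toFinset.1 (Finset.mem_of_mem_filter e he)
  · have hparity (e : Sym2 X) :
        J.count e • edgeParity e = if Odd (J.count e) then edgeParity e else 0 := by
      rw [← Nat.cast_smul_eq_nsmul (ZMod 2)]
      split_ifs with h
      · rw [ZMod.natCast_eq_one_iff_odd.2 h, one_smul]
      · rw [ZMod.natCast_eq_zero_iff_even.2 (Nat.not_odd_iff_even.1 h), zero_smul]
    calc _ = ∑ e ∈ J.toFinset.filter (fun e => Odd (J.count e)), edgeParity e := rfl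
      _ = ∑ e ∈ J.toFinset, J.count e • edgeParity e := by
        simp only [Finset.sum_filter, hparity]
      _ = degreeParity J := (Finset.sum_multiset_map_count J edgeParity).symm

lemma MConnected.exists_degreeParity_eq_single_add_single (hQ : MConnected Q)
    (hx : x ∈ mVerts Q) (hy : y ∈ mVerts Q) :
    ∃ J, (∀ e ∈ J, e ∈ Q) ∧ degreeParity J = .single x 1 + .single y 1 := by
  obtain ⟨p⟩ := hQ x hx y hy
  refine ⟨p.edges, fun e he => ?_, degreeParity_edges p⟩
  have := p.edges_subset_edgeSet (Multiset.mem_coe.1 he)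
  rw [mGraph, SimpleGraph.edgeSet_fromEdgeSet] at this
  exact this.1

/-- A `T`-join in a connected multigraph, where `T` is the support of `f`. -/
lemma MConnected.exists_le_degreeParity_eq (hQ : MConnected Q) {f : X →₀ ZMod 2}
    (hf : (f.support : Set X) ⊆ mVerts Q) (hdeg : f.degree = 0) :
    ∃ J ≤ Q, degreeParity J = f := by
  obtain rfl | hne := eq_or_ne f 0
  · exact ⟨0, Multiset.zero_le Q, map_zero _⟩
  obtain ⟨q, hq⟩ := Finsupp.support_nonempty_iff.2 hne
  have hpath (v) (hv : v ∈ f.support) :=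
    hQ.exists_degreeParity_eq_single_add_single (hf hv) (hf hq)
  choose! path hpath_mem hpath_parity using hpath
  obtain ⟨J, hJQ, hJ⟩ := _root_.exists_le_degreeParity_eq (Q := Q)
    (J := ∑ v ∈ f.support, path v) fun e he => by
      obtain ⟨v, hv, he⟩ := Multiset.mem_sum.1 he
      exact hpath_mem v hv e he
  have hone (v) (hv : v ∈ f.support) : f v = 1 :=
    Fin.eq_one_of_ne_zero _ (Finsupp.mem_support_iff.1 hv)
  refine ⟨J, hJQ, hJ.trans ?_⟩
  calc degreeParity (∑ v ∈ f.support, path v)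
      = ∑ v ∈ f.support, (Finsupp.single v (f v) + Finsupp.single q (f v)) := by
        rw [map_sum]
        exact Finset.sum_congr rfl fun v hv => by rw [hpath_parity v hv, hone v hv]
    _ = f + Finsupp.single q f.degree := by
        rw [Finset.sum_add_distrib, ← Finsupp.single_finsetSum]
        exact congrArg (· + _) f.sum_single
    _ = f := by rw [hdeg, Finsupp.single_zero, add_zero]

end Parity

section Weight

variable {X : Type*} [MetricSpace X] {F G : Multiset (Sym2 X)} {e : Sym2 X} {x y : X}

lemma edgeLen_nonneg (e : Sym2 X) : 0 ≤ edgeLen e := by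
  induction e with | _ x y => exact dist_nonneg

lemma dist_le_edgeLen (hx : x ∈ e) (hy : y ∈ e) : dist x y ≤ edgeLen e := by
  induction e with | _ a b =>
  change dist x y ≤ dist a b
  rcases Sym2.mem_iff.1 hx with rfl | rfl <;> rcases Sym2.mem_iff.1 hy with rfl | rfl <;>
    simp [dist_comm]

@[simp]
lemma mWeight_zero : mWeight (0 : Multiset (Sym2 X)) = 0 := by
  simp [mWeight]

@[simp]
lemma mWeight_add (F G : Multiset (Sym2 X)) : mWeight (F + G) = mWeight F + mWeight G := by
  simp [mWeight]

@[simp]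
lemma mWeight_singleton (x y : X) : mWeight {s(x, y)} = dist x y := by
  simp [mWeight, edgeLen]

lemma mWeight_nonneg (F : Multiset (Sym2 X)) : 0 ≤ mWeight F :=
  Multiset.sum_nonneg <| by
    simpa only [Multiset.mem_map, forall_exists_index, and_imp, forall_apply_eq_imp_iff₂] using
      fun e _ => edgeLen_nonneg e

lemma mWeight_mono (h : F ≤ G) : mWeight F ≤ mWeight G := by
  obtain ⟨H, rfl⟩ := Multiset.le_iff_exists_add.1 h
  rw [mWeight_add]
  linarith [mWeight_nonneg H]

lemma card_mul_le_mWeight {a : ℝ} (h : ∀ e ∈ F, a ≤ edgeLen e) : F.card * a ≤ mWeight F := by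
  simpa [mWeight] using Multiset.card_nsmul_le_sum (s := F.map edgeLen) (a := a) (by simpa using h)

lemma mWeight_eq_zero_of_subsingleton [Subsingleton X] (F : Multiset (Sym2 X)) :
    mWeight F = 0 := by
  refine Multiset.sum_eq_zero fun a ha => ?_
  obtain ⟨e, -, rfl⟩ := Multiset.mem_map.1 ha
  induction e with | _ x y =>
  exact dist_eq_zero.2 (Subsingleton.elim x y)

lemma restrictBall_eq (F : Multiset (Sym2 X)) (u : X) (r : ℝ) :
    restrictBall F u r = F.filter fun e : Sym2 X => (e : Set X) ⊆ Metric.closedBall u r := by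
  unfold restrictBall
  congr

lemma restrictBall_mono (F : Multiset (Sym2 X)) (u : X) : Monotone (restrictBall F u) := by
  intro r r' h
  rw [restrictBall_eq, restrictBall_eq]
  exact Multiset.monotone_filter_right F fun e he =>
    he.trans (Metric.closedBall_subset_closedBall h)

lemma pcCost_nonneg {T : Finset X} {π : X → ℝ} (hπ : ∀ v, 0 ≤ π v) (F : Multiset (Sym2 X)) :
    0 ≤ pcCost T π F :=
  add_nonneg (mWeight_nonneg F) (Finset.sum_nonneg fun v _ => hπ v)

end Weight

section Nets

/-- A hierarchy of nets with scale factor `sc ≥ 4`: level `i + 1` is a `sc ^ (i + 1)`-net of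
level `i`. -/
structure IsNetHierarchy {X : Type*} [PseudoMetricSpace X] (N : ℕ → Set X) (sc : ℝ) : Prop where
  four_le : 4 ≤ sc
  zero : N 0 = Set.univ
  anti : Antitone N
  separated : ∀ i, ∀ a ∈ N (i + 1), ∀ b ∈ N (i + 1), a ≠ b → sc ^ (i + 1) < dist a b
  covers : ∀ i, ∀ x ∈ N i, ∃ y ∈ N (i + 1), dist x y ≤ sc ^ (i + 1)

/-- A connected net-respecting multigraph, with no Eulerian condition. -/
structure IsNetwork {X : Type*} [MetricSpace X] (N : ℕ → Set X) (sc ε : ℝ)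
    (F : Multiset (Sym2 X)) : Prop where
  connected : MConnected F
  netRespecting : MNetRespecting N sc ε F

/-- `x` and `y` lie on a common network of weight at most `c`. -/
def NetLinked {X : Type*} [MetricSpace X] (N : ℕ → Set X) (sc ε : ℝ) (x y : X) (c : ℝ) : Prop :=
  ∃ Q, IsNetwork N sc ε Q ∧ x ∈ mVerts Q ∧ y ∈ mVerts Q ∧ mWeight Q ≤ c

variable {X : Type*} [MetricSpace X] {N : ℕ → Set X} {sc ε : ℝ} {F G : Multiset (Sym2 X)}
  {x y z p : X} {c c' : ℝ}

lemma MNetRespecting.add (hF : MNetRespecting N sc ε F) (hG : MNetRespecting N sc ε G) :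
    MNetRespecting N sc ε (F + G) :=
  fun x y h => (Multiset.mem_add.1 h).elim (hF x y) (hG x y)

lemma MNetRespecting.mono (hG : MNetRespecting N sc ε G) (h : F ≤ G) : MNetRespecting N sc ε F :=
  fun x y hxy => hG x y (Multiset.mem_of_le h hxy)

lemma MNetRespecting.mem_net (hF : MNetRespecting N sc ε F) (hN : Antitone N) (hsc : 1 < sc)
    (hxy : s(x, y) ∈ F) {i : ℕ} (h : sc ^ i ≤ ε * dist x y) : x ∈ N i := by
  obtain ⟨j, hj, hj'⟩ := exists_nat_pow_near ((one_le_pow₀ hsc.le).trans h) hsc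
  have hij : i < j + 1 := (pow_lt_pow_iff_right₀ hsc).1 (h.trans_lt hj')
  exact hN (Nat.lt_succ_iff.1 hij) (hF x y hxy j hj hj').1

lemma IsNetwork.add (hF : IsNetwork N sc ε F) (hG : IsNetwork N sc ε G)
    (hpF : p ∈ mVerts F) (hpG : p ∈ mVerts G) : IsNetwork N sc ε (F + G) :=
  ⟨hF.connected.add hG.connected hpF hpG, hF.netRespecting.add hG.netRespecting⟩

namespace NetLinked

lemma trans (h : NetLinked N sc ε x y c) (h' : NetLinked N sc ε y z c') :
    NetLinked N sc ε x z (c + c') := by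
  obtain ⟨Q, hQ, hx, hy, hw⟩ := h
  obtain ⟨Q', hQ', hy', hz, hw'⟩ := h'
  refine ⟨Q + Q', hQ.add hQ' hy hy', ?_, ?_, ?_⟩
  · exact mVerts_add Q Q' ▸ Or.inl hx
  · exact mVerts_add Q Q' ▸ Or.inr hz
  · exact mWeight_add Q Q' ▸ add_le_add hw hw'

lemma symm (h : NetLinked N sc ε x y c) : NetLinked N sc ε y x c := by
  obtain ⟨Q, hQ, hx, hy, hw⟩ := h
  exact ⟨Q, hQ, hy, hx, hw⟩

lemma mono (h : NetLinked N sc ε x y c) (hc : c ≤ c') : NetLinked N sc ε x y c' := by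
  obtain ⟨Q, hQ, hx, hy, hw⟩ := h
  exact ⟨Q, hQ, hx, hy, hw.trans hc⟩

end NetLinked

lemma isNetwork_singleton (hN : Antitone N) (hsc : 1 < sc) {j : ℕ} (hx : x ∈ N j) (hy : y ∈ N j)
    (h : ε * dist x y < sc ^ (j + 1)) : IsNetwork N sc ε {s(x, y)} := by
  refine ⟨.singleton x y, fun a b hab i hi _ => ?_⟩
  rw [Multiset.mem_singleton] at hab
  have hdist : dist a b = dist x y := congrArg edgeLen hab
  have hij : i < j + 1 := (pow_lt_pow_iff_right₀ hsc).1 ((hdist ▸ hi).trans_lt h)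
  have hsub : N j ⊆ N i := hN (Nat.lt_succ_iff.1 hij)
  rcases Sym2.eq_iff.1 hab with ⟨rfl, rfl⟩ | ⟨rfl, rfl⟩
  exacts [⟨hsub hx, hsub hy⟩, ⟨hsub hy, hsub hx⟩]

lemma netLinked_of_mem (hN : Antitone N) (hsc : 1 < sc) {j : ℕ} (hx : x ∈ N j) (hy : y ∈ N j)
    (h : ε * dist x y < sc ^ (j + 1)) : NetLinked N sc ε x y (dist x y) :=
  ⟨{s(x, y)}, isNetwork_singleton hN hsc hx hy h, by simp, by simp, (mWeight_singleton x y).le⟩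

namespace IsNetHierarchy

lemma one_lt (hN : IsNetHierarchy N sc) : 1 < sc := by linarith [hN.four_le]

lemma mem_zero (hN : IsNetHierarchy N sc) (x : X) : x ∈ N 0 := hN.zero ▸ Set.mem_univ x

lemma isNetwork_loop (hN : IsNetHierarchy N sc) (x : X) : IsNetwork N sc ε {s(x, x)} := by
  have := hN.one_lt
  exact isNetwork_singleton hN.anti hN.one_lt (hN.mem_zero x) (hN.mem_zero x) (by simp; linarith)

/-- Summing the geometric series of hops `sc + sc ^ 2 + ⋯ + sc ^ j`. -/
lemma exists_netLinked_mem (hN : IsNetHierarchy N sc) (hε : 0 < ε) (hε1 : ε < 1)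
    (j : ℕ) (x : X) :
    ∃ y ∈ N j, dist x y ≤ 4 / 3 * sc ^ j ∧ NetLinked N sc ε x y (4 / 3 * sc ^ j) := by
  have hsc := hN.four_le
  induction j with
  | zero =>
    refine ⟨x, hN.mem_zero x, ?_, {s(x, x)}, hN.isNetwork_loop x, ?_, ?_, ?_⟩ <;> norm_num
  | succ j ih =>
    obtain ⟨y, hy, hxy, hlink⟩ := ih
    obtain ⟨z, hz, hyz⟩ := hN.covers j y hy
    have hgeom : 4 / 3 * sc ^ j + sc ^ (j + 1) ≤ 4 / 3 * sc ^ (j + 1) := by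
      rw [pow_succ]
      nlinarith [pow_pos (show 0 < sc by linarith) j]
    have hyz' : ε * dist y z < sc ^ (j + 1) := by
      have := pow_pos (show 0 < sc by linarith) (j + 1)
      nlinarith
    refine ⟨z, hz, by linarith [dist_triangle x y z], ?_⟩
    refine (hlink.trans (netLinked_of_mem hN.anti hN.one_lt hy
      (hN.anti j.le_succ hz) hyz')).mono (by linarith)

lemma netLinked (hN : IsNetHierarchy N sc) (hε : 0 < ε) (hε1 : ε < 1) (x y : X) :
    NetLinked N sc ε x y (6 * sc * dist x y) := by
  have hsc := hN.four_le
  rcases lt_or_ge (dist x y) 1 with hd | hd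
  · have hdirect : ε * dist x y < sc ^ (0 + 1) := by
      rw [zero_add, pow_one]
      nlinarith [dist_nonneg (x := x) (y := y)]
    exact (netLinked_of_mem hN.anti hN.one_lt (hN.mem_zero x) (hN.mem_zero y) hdirect).mono
      (le_mul_of_one_le_left dist_nonneg (by linarith))
  obtain ⟨n, hn, hn'⟩ := exists_nat_pow_near hd hN.one_lt
  obtain ⟨x', hx', hxx', hlinkx⟩ := hN.exists_netLinked_mem hε hε1 (n + 1) x
  obtain ⟨y', hy', hyy', hlinky⟩ := hN.exists_netLinked_mem hε hε1 (n + 1) y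
  have hpow : 0 < sc ^ (n + 1) := pow_pos (by linarith) _
  have hdist : dist x' y' ≤ dist x y + 8 / 3 * sc ^ (n + 1) := by
    linarith [dist_triangle4 x' x y y', dist_comm x x']
  have hmid : ε * dist x' y' < sc ^ (n + 1 + 1) := by
    rw [pow_succ sc (n + 1)]
    nlinarith [hpow, dist_nonneg (x := x') (y := y')]
  have hscale : sc ^ (n + 1) ≤ sc * dist x y := by
    rw [pow_succ']
    exact mul_le_mul_of_nonneg_left hn (by linarith)
  refine ((hlinkx.trans (netLinked_of_mem hN.anti hN.one_lt hx' hy' hmid)).trans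
    hlinky.symm).mono ?_
  nlinarith

lemma exists_isNetwork_attach (hN : IsNetHierarchy N sc) (hε : 0 < ε) (hε1 : ε < 1)
    {Q₀ : Multiset (Sym2 X)} (hQ₀ : IsNetwork N sc ε Q₀) {ρ : ℝ}
    (Y : Finset X) (hY : ∀ y ∈ Y, ∃ q ∈ mVerts Q₀, dist y q ≤ ρ) :
    ∃ Q, IsNetwork N sc ε Q ∧ mVerts Q₀ ⊆ mVerts Q ∧ (Y : Set X) ⊆ mVerts Q ∧
      mWeight Q ≤ mWeight Q₀ + Y.card * (6 * sc * ρ) := by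
  induction Y using Finset.induction_on with
  | empty => exact ⟨Q₀, hQ₀, subset_rfl, by simp, by simp⟩
  | insert y Y hyY ih =>
    obtain ⟨Q, hQ, hQ₀Q, hYQ, hw⟩ := ih fun z hz => hY z (Finset.mem_insert_of_mem hz)
    obtain ⟨q, hq, hyq⟩ := hY y (Finset.mem_insert_self y Y)
    obtain ⟨P, hP, hyP, hqP, hPw⟩ := hN.netLinked hε hε1 y q
    refine ⟨Q + P, hQ.add hP (hQ₀Q hq) hqP, ?_, ?_, ?_⟩
    · exact hQ₀Q.trans (mVerts_mono (Multiset.le_add_right Q P))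
    · rw [Finset.coe_insert, mVerts_add]
      exact Set.insert_subset (Or.inr hyP) (hYQ.trans Set.subset_union_left)
    · have hstep : 6 * sc * dist y q ≤ 6 * sc * ρ :=
        mul_le_mul_of_nonneg_left hyq (by linarith [hN.four_le])
      rw [mWeight_add, Finset.card_insert_of_notMem hyY]
      push_cast
      linarith

lemma exists_isNetwork_of_cover (hN : IsNetHierarchy N sc) (hε : 0 < ε) (hε1 : ε < 1)
    {u : X} {R ρ : ℝ} (hρ : 0 ≤ ρ) (hρR : ρ ≤ R) {M Y : Finset X}
    (hM : Metric.closedBall u R ⊆ ⋃ c ∈ M, Metric.closedBall c ρ)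
    (hY : (Y : Set X) ⊆ Metric.closedBall u R) :
    ∃ Q, IsNetwork N sc ε Q ∧ (Y : Set X) ⊆ mVerts Q ∧
      mWeight Q ≤ 6 * sc * (M.card * (2 * R) + Y.card * ρ) := by
  obtain ⟨Q₀, hQ₀, -, hMQ₀, hQ₀w⟩ := hN.exists_isNetwork_attach hε hε1 (hN.isNetwork_loop u)
    (ρ := 2 * R) (M.filter (dist · u ≤ 2 * R)) fun c hc =>
      ⟨u, by simp, (Finset.mem_filter.1 hc).2⟩
  have hnear (y) (hy : y ∈ Y) : ∃ q ∈ mVerts Q₀, dist y q ≤ ρ := by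
    obtain ⟨c, hc, hyc⟩ := Set.mem_iUnion₂.1 (hM (hY hy))
    rw [Metric.mem_closedBall] at hyc
    refine ⟨c, hMQ₀ ?_, hyc⟩
    have hyu : dist y u ≤ R := hY hy
    exact Finset.mem_filter.2 ⟨hc, by linarith [dist_triangle_left c u y]⟩
  obtain ⟨Q, hQ, -, hYQ, hQw⟩ := hN.exists_isNetwork_attach hε hε1 hQ₀ Y hnear
  refine ⟨Q, hQ, hYQ, ?_⟩
  have hcard : ((M.filter (dist · u ≤ 2 * R)).card : ℝ) ≤ M.card := by
    exact_mod_cast Finset.card_filter_le M _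
  have hspoke : 0 ≤ 6 * sc * (2 * R) := by
    have := hN.four_le
    have := hρ.trans hρR
    positivity
  rw [mWeight_singleton, dist_self] at hQ₀w
  linarith [mul_le_mul_of_nonneg_right hcard hspoke]

end IsNetHierarchy

end Nets

section Doubling

/-- The doubling dimension of `X` is at most `k`. -/
def DoublingDimLE (X : Type*) [PseudoMetricSpace X] (k : ℕ) : Prop :=
  ∀ x : X, ∀ ρ : ℝ, 0 < ρ → ∃ M : Finset X, M.card ≤ 2 ^ k ∧
    Metric.closedBall x (2 * ρ) ⊆ ⋃ c ∈ M, Metric.closedBall c ρ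

variable {X : Type*} {k : ℕ} {ρ R : ℝ}

namespace DoublingDimLE

lemma exists_cover_two_pow [PseudoMetricSpace X] (h : DoublingDimLE X k) (hρ : 0 < ρ) (m : ℕ)
    (x : X) : ∃ M : Finset X, M.card ≤ (2 ^ k) ^ m ∧
      Metric.closedBall x (2 ^ m * ρ) ⊆ ⋃ c ∈ M, Metric.closedBall c ρ := by
  induction m generalizing x with
  | zero => exact ⟨{x}, by simp, by simp⟩
  | succ m ih =>
    obtain ⟨M, hM, hxM⟩ := h x (2 ^ m * ρ) (by positivity)
    choose f hf hcover using ih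
    refine ⟨M.biUnion f, ?_, ?_⟩
    · rw [pow_succ']
      exact (Finset.card_biUnion_le_card_mul _ _ _ fun c _ => hf c).trans
        (Nat.mul_le_mul_right _ hM)
    · rw [pow_succ', mul_assoc, Finset.set_biUnion_biUnion]
      exact hxM.trans (Set.iUnion₂_mono fun c _ => hcover c)

lemma exists_cover_card_le [PseudoMetricSpace X] (h : DoublingDimLE X k) (hρ : 0 < ρ)
    (hρR : ρ ≤ R) (x : X) : ∃ M : Finset X, (M.card : ℝ) ≤ (2 * R / ρ) ^ k ∧
      Metric.closedBall x R ⊆ ⋃ c ∈ M, Metric.closedBall c ρ := by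
  obtain ⟨m, hm, hm'⟩ := exists_nat_pow_near ((one_le_div hρ).2 hρR) one_lt_two
  obtain ⟨M, hM, hxM⟩ := h.exists_cover_two_pow hρ (m + 1) x
  refine ⟨M, ?_, (Metric.closedBall_subset_closedBall ((div_lt_iff₀ hρ).1 hm').le).trans hxM⟩
  calc (M.card : ℝ) ≤ (2 ^ (m + 1)) ^ k := by
        rw [← pow_mul, mul_comm, pow_mul]
        exact_mod_cast hM
    _ ≤ (2 * R / ρ) ^ k := by
        refine pow_le_pow_left₀ (by positivity) ?_ k
        rw [pow_succ', mul_div_assoc]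
        linarith

lemma subsingleton [MetricSpace X] (h : DoublingDimLE X 0) : Subsingleton X := by
  refine ⟨fun x y => by_contra fun hxy => ?_⟩
  have hd : 0 < dist x y := dist_pos.2 hxy
  obtain ⟨M, hM, hcover⟩ := h.exists_cover_two_pow (ρ := dist x y / 4) (by positivity) 2 x
  obtain ⟨a, ha, hxa⟩ := Set.mem_iUnion₂.1 (hcover (Metric.mem_closedBall_self (by positivity)))
  obtain ⟨b, hb, hyb⟩ := Set.mem_iUnion₂.1 (hcover (a := y) (by
    rw [Metric.mem_closedBall, dist_comm]
    linarith))
  obtain rfl : a = b := Finset.card_le_one.1 (by simpa using hM) a ha b hb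
  rw [Metric.mem_closedBall] at hxa hyb
  linarith [dist_triangle_right x y a]

end DoublingDimLE

lemma card_le_of_separated_of_cover [PseudoMetricSpace X] {Y M : Finset X} {B : Set X}
    (hY : (Y : Set X) ⊆ B) (hM : B ⊆ ⋃ c ∈ M, Metric.closedBall c ρ)
    (hsep : ∀ a ∈ Y, ∀ b ∈ Y, a ≠ b → 2 * ρ < dist a b) : Y.card ≤ M.card := by
  refine Finset.card_le_card_of_forall_subsingleton (fun y c => dist y c ≤ ρ) (fun y hy => ?_)
    fun c _ a ha b hb => by_contra fun hab => ?_
  · obtain ⟨c, hc, hyc⟩ := Set.mem_iUnion₂.1 (hM (hY hy))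
    exact ⟨c, hc, hyc⟩
  · linarith [hsep a ha.1 b hb.1 hab, dist_triangle_right a b c, ha.2, hb.2]

end Doubling

section Averaging

open MeasureTheory

variable {X : Type*} [MetricSpace X] {u : X} {r a b : ℝ}

/-- The edge `e` crosses the sphere of radius `r` around `u`: it joins the closed ball to its
complement. -/
def Crosses (u : X) (r : ℝ) (e : Sym2 X) : Prop :=
  (∃ x ∈ e, x ∈ Metric.closedBall u r) ∧ ∃ x ∈ e, x ∉ Metric.closedBall u r

lemma crosses_mk_iff {x y : X} : Crosses u r s(x, y) ↔
    r ∈ Set.Ico (min (dist x u) (dist y u)) (max (dist x u) (dist y u)) := by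
  simp [Crosses]

lemma integrable_crosses (e : Sym2 X) :
    Integrable (Set.indicator {r | Crosses u r e} (1 : ℝ → ℝ)) := by
  induction e with | _ x y =>
  simp only [crosses_mk_iff, Set.ofPred_mem_eq]
  exact (integrable_indicator_iff measurableSet_Ico).2 (integrableOn_const (by simp))

lemma integral_crosses_le (e : Sym2 X) :
    ∫ r, Set.indicator {r | Crosses u r e} (1 : ℝ → ℝ) r ≤ edgeLen e := by
  induction e with | _ x y =>
  simp only [crosses_mk_iff, Set.ofPred_mem_eq]
  rw [integral_indicator_one measurableSet_Ico, Real.volume_real_Ico_of_le min_le_max,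
    max_sub_min_eq_abs']
  exact abs_dist_sub_le x y u

lemma countP_cons_crosses (e : Sym2 X) (S : Multiset (Sym2 X)) (r : ℝ) :
    ((e ::ₘ S).countP (Crosses u r) : ℝ) =
      S.countP (Crosses u r) + Set.indicator {r | Crosses u r e} (1 : ℝ → ℝ) r := by
  simp [Multiset.countP_cons, Set.indicator_apply]

lemma integrable_countP_crosses (S : Multiset (Sym2 X)) :
    Integrable fun r => (S.countP (Crosses u r) : ℝ) := by
  induction S using Multiset.induction_on with
  | empty => simp
  | cons e S ih =>
    simp only [countP_cons_crosses]
    exact ih.add (integrable_crosses e)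

lemma integral_countP_crosses_le (S : Multiset (Sym2 X)) :
    ∫ r, (S.countP (Crosses u r) : ℝ) ≤ mWeight S := by
  induction S using Multiset.induction_on with
  | empty => simp
  | cons e S ih =>
    simp only [countP_cons_crosses]
    rw [integral_add (integrable_countP_crosses S) (integrable_crosses e), mWeight,
      Multiset.map_cons, Multiset.sum_cons, add_comm]
    exact add_le_add (integral_crosses_le e) ih

lemma exists_countP_crosses_mul_le (S : Multiset (Sym2 X)) (u : X) (hab : a < b) :
    ∃ r ∈ Set.Icc a b, S.countP (Crosses u r) * (b - a) ≤ mWeight S := by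
  have hint := integrable_countP_crosses (u := u) S
  obtain ⟨r, hr, hle⟩ := exists_le_setAverage (s := Set.Icc a b) (by simp [hab]) (by simp)
    hint.integrableOn
  refine ⟨r, hr, ?_⟩
  rw [setAverage_eq, Real.volume_real_Icc_of_le hab.le, smul_eq_mul, ← div_eq_inv_mul,
    le_div_iff₀ (sub_pos.2 hab)] at hle
  calc _ ≤ ∫ r in Set.Icc a b, (S.countP (Crosses u r) : ℝ) := hle
    _ ≤ ∫ r, (S.countP (Crosses u r) : ℝ) :=
      setIntegral_le_integral hint (.of_forall fun _ => Nat.cast_nonneg _)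
    _ ≤ mWeight S := integral_countP_crosses_le S

/-- The edges of `F` of length at most `ℓ` that cross the sphere of radius `r` around `u`. -/
noncomputable def shortCrossing (F : Multiset (Sym2 X)) (u : X) (r ℓ : ℝ) : Multiset (Sym2 X) :=
  F.filter fun e => Crosses u r e ∧ edgeLen e ≤ ℓ

lemma exists_card_shortCrossing_mul_le (F : Multiset (Sym2 X)) (u : X) (r₀ : ℝ) {ℓ : ℝ}
    (hℓ : 0 < ℓ) : ∃ r ∈ Set.Icc r₀ (r₀ + ℓ), (shortCrossing F u r ℓ).card * ℓ ≤
      mWeight (restrictBall F u (r₀ + 2 * ℓ)) - mWeight (restrictBall F u r₀) := by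
  obtain ⟨S, hS⟩ := Multiset.le_iff_exists_add.1
    (restrictBall_mono F u (show r₀ ≤ r₀ + 2 * ℓ by linarith))
  obtain ⟨r, hr, hle⟩ := exists_countP_crosses_mul_le S u (lt_add_of_pos_right r₀ hℓ)
  refine ⟨r, hr, ?_⟩
  have hsub : shortCrossing F u r ℓ ≤ S.filter (Crosses u r) := by
    have hinner : (restrictBall F u r₀).filter (Crosses u r) = 0 := by
      refine Multiset.filter_eq_nil.2 fun e he ⟨_, x, hx, hxr⟩ => hxr ?_
      exact Metric.closedBall_subset_closedBall hr.1 ((Multiset.mem_filter.1 he).2 x hx)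
    have houter : S.filter (Crosses u r) =
        (restrictBall F u (r₀ + 2 * ℓ)).filter (Crosses u r) := by
      rw [hS, Multiset.filter_add, hinner, zero_add]
    rw [houter, restrictBall_eq, Multiset.filter_filter]
    refine Multiset.monotone_filter_right F fun e ⟨hcross, hlen⟩ => ⟨hcross, fun y hy => ?_⟩
    obtain ⟨x, hx, hxr⟩ := hcross.1
    rw [Metric.mem_closedBall] at hxr ⊢
    linarith [dist_triangle y x u, (dist_le_edgeLen hy hx).trans hlen, hr.2]
  have hcard : ((shortCrossing F u r ℓ).card : ℝ) ≤ S.countP (Crosses u r) := by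
    rw [Multiset.countP_eq_card_filter]
    exact_mod_cast Multiset.card_le_card hsub
  rw [hS, mWeight_add, add_sub_cancel_left]
  rw [add_sub_cancel_left] at hle
  exact (mul_le_mul_of_nonneg_right hcard hℓ.le).trans hle

end Averaging

section Exchange

variable {X : Type*} {T : Finset X} {π : X → ℝ} {F F' G E R Q : Multiset (Sym2 X)} {B : Set X}

lemma sum_penalties_le (hπ : ∀ v, 0 ≤ π v)
    (h : ∀ v ∈ mVerts F, v ∉ mVerts F' → v ∈ B ∧ v ∉ mVerts G) :
    ∑ v ∈ T with v ∉ mVerts F', π v ≤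
      ∑ v ∈ T with v ∉ mVerts F, π v + ∑ v ∈ T.filter (· ∈ B) with v ∉ mVerts G, π v := by
  rw [← Finset.sum_union_inter]
  refine (Finset.sum_le_sum_of_subset_of_nonneg (fun v hv => ?_) fun v _ _ => hπ v).trans
    (le_add_of_nonneg_right (Finset.sum_nonneg fun v _ => hπ v))
  simp only [Finset.mem_union, Finset.mem_filter] at hv ⊢
  by_cases hF : v ∈ mVerts F
  · exact Or.inr ⟨⟨hv.1, (h v hF hv.2).1⟩, (h v hF hv.2).2⟩
  · exact Or.inl ⟨hv.1, hF⟩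

lemma exists_le_mEulerian_add (hF : MEulerian (R + E)) (hG : MEulerian G) (hQ : MConnected Q)
    (hcut : mVerts R ∩ mVerts E ⊆ mVerts Q) : ∃ J ≤ Q, MEulerian (E + G + Q + J) := by
  simp only [mEulerian_iff_degreeParity_eq_zero, map_add] at hF hG ⊢
  have hRE : degreeParity R = degreeParity E :=
    (eq_neg_of_add_eq_zero_left hF).trans (ZModModule.neg_eq_self _)
  have hsupport : ((degreeParity E + degreeParity Q).support : Set X) ⊆ mVerts Q := by
    intro v hv
    by_contra hvQ
    refine Finsupp.mem_support_iff.1 hv ?_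
    rw [Finsupp.add_apply, degreeParity_apply_of_notMem hvQ, add_zero]
    by_cases hvE : v ∈ mVerts E
    · rw [← hRE]
      exact degreeParity_apply_of_notMem fun hvR => hvQ (hcut ⟨hvR, hvE⟩)
    · exact degreeParity_apply_of_notMem hvE
  obtain ⟨J, hJQ, hJ⟩ := hQ.exists_le_degreeParity_eq hsupport (by simp [degree_degreeParity])
  exact ⟨J, hJQ, by rw [hG, hJ, add_zero, ZModModule.add_self]⟩

lemma MConnected.exchange {J : Multiset (Sym2 X)} (hF : MConnected (R + E)) (hG : MConnected G)
    (hQ : MConnected Q) (hJQ : J ≤ Q) (hR : (mVerts R).Nonempty)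
    (hcut : mVerts R ∩ mVerts E ⊆ mVerts Q)
    (hGQ : (mVerts G).Nonempty → (mVerts G ∩ mVerts Q).Nonempty) :
    MConnected (E + G + Q + J) := by
  refine hQ.of_reachable_le (le_add_right (Multiset.le_add_left Q _)) fun v hv => ?_
  simp only [mVerts_add, Set.mem_union, or_assoc] at hv
  rcases hv with hvE | hvG | hvQ | hvJ
  · obtain ⟨q, hq, hvq⟩ := hF.exists_reachable_mem_inter hR hvE
    exact ⟨q, hcut hq, hvq.mono (mGraph_mono (by simp only [add_assoc, Multiset.le_add_right]))⟩
  · obtain ⟨q, hqG, hqQ⟩ := hGQ ⟨v, hvG⟩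
    exact ⟨q, hqQ, (hG v hvG q hqG).mono (mGraph_mono
      (le_add_right (le_add_right (Multiset.le_add_left G E))))⟩
  · exact ⟨v, hvQ, .rfl⟩
  · exact ⟨v, mVerts_mono hJQ hvJ, .rfl⟩

variable [MetricSpace X] {N : ℕ → Set X} {sc ε : ℝ} {eulerCase : Bool}

/-- A net-respecting feasible solution: of the prize-collecting TSP (Eulerian) if `eulerCase`
holds, of the prize-collecting Steiner tree problem otherwise. -/
structure IsSolution (N : ℕ → Set X) (sc ε : ℝ) (eulerCase : Bool) (F : Multiset (Sym2 X)) : Prop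
    extends IsNetwork N sc ε F where
  eulerian : eulerCase = true → MEulerian F

/-- A net-respecting solution of minimum cost for the instance `(T, π)`. -/
structure IsMinSolution (N : ℕ → Set X) (sc ε : ℝ) (eulerCase : Bool) (T : Finset X) (π : X → ℝ)
    (F : Multiset (Sym2 X)) : Prop extends IsSolution N sc ε eulerCase F where
  minimal : ∀ F', IsSolution N sc ε eulerCase F' → pcCost T π F ≤ pcCost T π F'

lemma IsSolution.zero : IsSolution N sc ε eulerCase 0 where
  connected := .zero
  netRespecting := by simp [MNetRespecting]
  eulerian _ := by simp [MEulerian]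

lemma IsSolution.exists_exchange (hF : IsSolution N sc ε eulerCase (R + E))
    (hG : IsSolution N sc ε eulerCase G) (hQ : IsNetwork N sc ε Q) (hR : (mVerts R).Nonempty)
    (hcut : mVerts R ∩ mVerts E ⊆ mVerts Q)
    (hGQ : (mVerts G).Nonempty → (mVerts G ∩ mVerts Q).Nonempty) :
    ∃ J ≤ Q, IsSolution N sc ε eulerCase (E + G + Q + J) := by
  obtain ⟨J, hJQ, hJ⟩ : ∃ J ≤ Q, eulerCase = true → MEulerian (E + G + Q + J) := by
    cases eulerCase with
    | false => exact ⟨0, Multiset.zero_le Q, by simp⟩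
    | true =>
      obtain ⟨J, hJQ, hJ⟩ :=
        exists_le_mEulerian_add (hF.eulerian rfl) (hG.eulerian rfl) hQ.connected hcut
      exact ⟨J, hJQ, fun _ => hJ⟩
  refine ⟨J, hJQ, ⟨hF.connected.exchange hG.connected hQ.connected hJQ hR hcut hGQ, ?_⟩, hJ⟩
  exact (((hF.netRespecting.mono (Multiset.le_add_left E R)).add hG.netRespecting).add
    hQ.netRespecting).add (hQ.netRespecting.mono hJQ)

/-- Replacing the part `R` of an optimal solution by `G`, the connector `Q` and a subset of `Q`
that repairs parities. -/
lemma IsMinSolution.mWeight_le_of_exchange (hF : IsMinSolution N sc ε eulerCase T π (R + E))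
    (hπ : ∀ v, 0 ≤ π v) (hG : IsSolution N sc ε eulerCase G) (hQ : IsNetwork N sc ε Q)
    (hcut : mVerts R ∩ mVerts E ⊆ mVerts Q) (hRB : mVerts R ⊆ mVerts Q ∪ B)
    (hGQ : (mVerts G).Nonempty → (mVerts G ∩ mVerts Q).Nonempty) :
    mWeight R ≤ pcCost (T.filter (· ∈ B)) π G + 2 * mWeight Q := by
  obtain hR | hR := (mVerts R).eq_empty_or_nonempty
  · rw [mVerts_eq_empty.1 hR, mWeight_zero]
    linarith [pcCost_nonneg hπ G (T := T.filter (· ∈ B)), mWeight_nonneg Q]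
  obtain ⟨J, hJQ, hJ⟩ := hF.exists_exchange hG hQ hR hcut hGQ
  have hmin := hF.minimal _ hJ
  have hpenalty := sum_penalties_le (T := T) (B := B) (G := G) (F := R + E) hπ
    (F' := E + G + Q + J) fun v hv hv' => by
      simp only [mVerts_add, Set.mem_union, not_or] at hv hv'
      exact ⟨(hRB (hv.resolve_right hv'.1.1.1)).resolve_left hv'.1.2, hv'.1.1.2⟩
  simp only [pcCost, mWeight_add] at hmin ⊢
  linarith [mWeight_mono hJQ]

end Exchange

section Excision

variable {X : Type*} [MetricSpace X] {F G : Multiset (Sym2 X)} {u v : X} {r ℓ R ρ : ℝ}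
  {N : ℕ → Set X} {sc ε : ℝ} {i : ℕ}

/-- The edges removed by the local exchange: those inside the ball of radius `r`, and those
longer than `ℓ` inside the ball of radius `R`. -/
def Excised (u : X) (r ℓ R : ℝ) (e : Sym2 X) : Prop :=
  (e : Set X) ⊆ Metric.closedBall u r ∨ ℓ < edgeLen e ∧ (e : Set X) ⊆ Metric.closedBall u R

/-- The excised edges of `F` that are not inside the ball of radius `r`. -/
noncomputable def longOuter (F : Multiset (Sym2 X)) (u : X) (r ℓ R : ℝ) : Multiset (Sym2 X) :=
  (F.filter (Excised u r ℓ R)).filter fun e => ¬ (e : Set X) ⊆ Metric.closedBall u r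

/-- The vertices of `F` through which the excised edges may be attached to the others. -/
noncomputable def portals (F : Multiset (Sym2 X)) (A : Set X) (u : X) (r ℓ R : ℝ) : Finset X :=
  vertexFinset (shortCrossing F u r ℓ + longOuter F u r ℓ R) ∪
    (vertexFinset F).filter (· ∈ A ∩ Metric.closedBall u r)

lemma mem_longOuter {e : Sym2 X} : e ∈ longOuter F u r ℓ R ↔
    e ∈ F ∧ (ℓ < edgeLen e ∧ (e : Set X) ⊆ Metric.closedBall u R) ∧
      ¬ (e : Set X) ⊆ Metric.closedBall u r := by
  simp only [longOuter, Excised, Multiset.mem_filter]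
  tauto

lemma mWeight_restrictBall_add_card_longOuter_le (F : Multiset (Sym2 X)) (u : X) :
    mWeight (restrictBall F u r) + (longOuter F u r ℓ R).card * ℓ ≤
      mWeight (F.filter (Excised u r ℓ R)) := by
  have hinner : restrictBall F u r = (F.filter (Excised u r ℓ R)).filter
      fun e : Sym2 X => (e : Set X) ⊆ Metric.closedBall u r := by
    rw [restrictBall_eq, Multiset.filter_filter]
    exact Multiset.filter_congr fun e _ => ⟨fun h => ⟨h, Or.inl h⟩, And.left⟩
  have hlong := card_mul_le_mWeight (F := longOuter F u r ℓ R) fun e he =>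
    (mem_longOuter.1 he).2.1.1.le
  calc _ ≤ mWeight (restrictBall F u r) + mWeight (longOuter F u r ℓ R) :=
        add_le_add_right hlong _
    _ = mWeight (F.filter (Excised u r ℓ R)) := by
        rw [← mWeight_add, hinner, longOuter, Multiset.filter_add_not]

lemma mVerts_excised_subset :
    mVerts (F.filter (Excised u r ℓ R)) ⊆
      mVerts (longOuter F u r ℓ R) ∪ Metric.closedBall u r := by
  rintro v ⟨e, he, hv⟩
  by_cases her : (e : Set X) ⊆ Metric.closedBall u r
  · exact Or.inr (her hv)
  · exact Or.inl (mem_mVerts_of_mem (Multiset.mem_filter.2 ⟨he, her⟩) hv)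

lemma mVerts_excised_inter_subset_portals (hF : MNetRespecting N sc ε F) (hN : Antitone N)
    (hsc : 1 < sc) (hε : 0 < ε) (hR : sc ^ i ≤ ε * (R - r)) :
    mVerts (F.filter (Excised u r ℓ R)) ∩ mVerts (F.filter fun e => ¬ Excised u r ℓ R e) ⊆
      portals F (N i) u r ℓ R := by
  rintro v ⟨hvR, e, he, hve⟩
  obtain ⟨heF, heR⟩ := Multiset.mem_filter.1 he
  simp only [portals, Finset.coe_union, Set.mem_union, Finset.mem_coe, mem_vertexFinset,
    mVerts_add, Finset.mem_filter]
  rcases mVerts_excised_subset hvR with hvlong | hvr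
  · exact Or.inl (Or.inr hvlong)
  obtain ⟨heℓ, heR'⟩ := not_or.1 heR
  by_cases hlen : edgeLen e ≤ ℓ
  · obtain ⟨y, hy, hyr⟩ := Set.not_subset.1 heℓ
    exact Or.inl (Or.inl (mem_mVerts_of_mem
      (Multiset.mem_filter.2 ⟨heF, ⟨⟨v, hve, hvr⟩, y, hy, hyr⟩, hlen⟩) hve))
  · -- The edge leaves the ball of radius `R`, so it is long enough to have its endpoints in `N i`.
    obtain ⟨y, hy, hyR⟩ := Set.not_subset.1 fun h => heR' ⟨not_le.1 hlen, h⟩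
    rw [Metric.mem_closedBall] at hvr hyR
    have hvy : R - r ≤ dist v y := by linarith [dist_triangle y v u, dist_comm v y]
    have hRr : 0 < R - r := pos_of_mul_pos_right ((pow_pos (by linarith) i).trans_le hR) hε.le
    have hne : v ≠ y := dist_pos.1 (hRr.trans_le hvy)
    have hmem : s(v, y) ∈ F := (Sym2.mem_and_mem_iff hne).1 ⟨hve, hy⟩ ▸ heF
    exact Or.inr ⟨mem_mVerts_of_mem heF hve,
      hF.mem_net hN hsc hmem (hR.trans (mul_le_mul_of_nonneg_left hvy hε.le)), hvr⟩

lemma portals_subset_closedBall {A : Set X} (hℓ : 0 ≤ ℓ) (hrR : r + ℓ ≤ R) :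
    (portals F A u r ℓ R : Set X) ⊆ Metric.closedBall u R := by
  intro v hv
  simp only [portals, Finset.coe_union, Set.mem_union, Finset.mem_coe, mem_vertexFinset,
    mVerts_add, Finset.mem_filter] at hv
  rcases hv with (⟨e, he, hve⟩ | ⟨e, he, hve⟩) | ⟨-, -, hv⟩
  · obtain ⟨-, ⟨⟨x, hx, hxr⟩, -⟩, hlen⟩ := Multiset.mem_filter.1 he
    rw [Metric.mem_closedBall] at hxr ⊢
    linarith [dist_triangle v x u, (dist_le_edgeLen hve hx).trans hlen]
  · exact (mem_longOuter.1 he).2.1.2 hve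
  · exact Metric.closedBall_subset_closedBall (by linarith) hv

lemma card_portals_le {A : Set X} (hrR : r ≤ R)
    (hA : ∀ a ∈ A, ∀ b ∈ A, a ≠ b → 2 * ρ < dist a b) {M : Finset X}
    (hM : Metric.closedBall u R ⊆ ⋃ c ∈ M, Metric.closedBall c ρ) :
    (portals F A u r ℓ R).card ≤
      ((shortCrossing F u r ℓ).card + (longOuter F u r ℓ R).card) * 2 + M.card := by
  refine (Finset.card_union_le _ _).trans (add_le_add ?_ ?_)
  · exact (card_vertexFinset_le _).trans_eq (by rw [Multiset.card_add])
  · refine card_le_of_separated_of_cover (fun v hv => ?_) hM fun a ha b hb =>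
      hA a (Finset.mem_filter.1 ha).2.1 b (Finset.mem_filter.1 hb).2.1
    exact Metric.closedBall_subset_closedBall hrR (Finset.mem_filter.1 hv).2.2

end Excision

section LocalStep

variable {X : Type*} [MetricSpace X] {N : ℕ → Set X} {sc ε : ℝ} {eulerCase : Bool}
  {T : Finset X} {π : X → ℝ} {F G : Multiset (Sym2 X)} {u : X} {r₀ b ℓ R ρ : ℝ} {i k : ℕ}
  {M : Finset X}

lemma IsNetHierarchy.exists_isNetwork_meeting (hN : IsNetHierarchy N sc) (hε : 0 < ε)
    (hε1 : ε < 1) (hρ : 0 ≤ ρ) (hρR : ρ ≤ R)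
    (hM : Metric.closedBall u R ⊆ ⋃ c ∈ M, Metric.closedBall c ρ) {Y : Finset X}
    (hY : (Y : Set X) ⊆ Metric.closedBall u R)
    (hG : (mVerts G).Nonempty → (mVerts G ∩ Metric.closedBall u R).Nonempty) :
    ∃ Q, IsNetwork N sc ε Q ∧ (Y : Set X) ⊆ mVerts Q ∧
      ((mVerts G).Nonempty → (mVerts G ∩ mVerts Q).Nonempty) ∧
      mWeight Q ≤ 6 * sc * (M.card * (2 * R) + (Y.card + 1) * ρ) := by
  have hρsc : 0 ≤ 6 * sc * ρ := mul_nonneg (by linarith [hN.four_le]) hρ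
  obtain hG0 | hG0 := (mVerts G).eq_empty_or_nonempty
  · obtain ⟨Q, hQ, hYQ, hw⟩ := hN.exists_isNetwork_of_cover hε hε1 hρ hρR hM hY
    exact ⟨Q, hQ, hYQ, by simp [hG0], by linarith⟩
  obtain ⟨g, hg, hgR⟩ := hG hG0
  obtain ⟨Q, hQ, hYQ, hw⟩ := hN.exists_isNetwork_of_cover hε hε1 hρ hρR hM (Y := insert g Y)
    (by rw [Finset.coe_insert]; exact Set.insert_subset hgR hY)
  rw [Finset.coe_insert, Set.insert_subset_iff] at hYQ
  have hcard : ((insert g Y).card : ℝ) ≤ Y.card + 1 := by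
    exact_mod_cast Finset.card_insert_le g Y
  refine ⟨Q, hQ, hYQ.2, fun _ => ⟨g, hg, hYQ.1⟩, hw.trans ?_⟩
  linarith [mul_le_mul_of_nonneg_right hcard hρsc]

lemma IsNetHierarchy.exists_connector {r : ℝ} (hN : IsNetHierarchy N sc) (hε : 0 < ε)
    (hε1 : ε < 1) (hℓ : 0 ≤ ℓ) (hrR : r + ℓ ≤ R) (hρ : 0 ≤ ρ) (hρR : ρ ≤ R) {A : Set X}
    (hA : ∀ x ∈ A, ∀ y ∈ A, x ≠ y → 2 * ρ < dist x y)
    (hM : Metric.closedBall u R ⊆ ⋃ c ∈ M, Metric.closedBall c ρ)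
    (hG : (mVerts G).Nonempty → (mVerts G ∩ Metric.closedBall u R).Nonempty) :
    ∃ Q, IsNetwork N sc ε Q ∧ (portals F A u r ℓ R : Set X) ⊆ mVerts Q ∧
      ((mVerts G).Nonempty → (mVerts G ∩ mVerts Q).Nonempty) ∧
      2 * mWeight Q ≤
        24 * sc * ρ * ((shortCrossing F u r ℓ).card + (longOuter F u r ℓ R).card) +
          48 * sc * R * M.card := by
  obtain ⟨Q, hQ, hYQ, hGQ, hQw⟩ := hN.exists_isNetwork_meeting hε hε1 hρ hρR hM
    (portals_subset_closedBall (F := F) (A := A) hℓ hrR) hG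
  refine ⟨Q, hQ, hYQ, hGQ, ?_⟩
  have hcard : ((portals F A u r ℓ R).card : ℝ) ≤
      ((shortCrossing F u r ℓ).card + (longOuter F u r ℓ R).card) * 2 + M.card := by
    exact_mod_cast card_portals_le (by linarith) hA hM
  have hMone : (1 : ℝ) ≤ M.card := by
    obtain ⟨c, hc, -⟩ := Set.mem_iUnion₂.1 (hM (Metric.mem_closedBall_self (hρ.trans hρR)))
    exact_mod_cast Finset.card_pos.2 ⟨c, hc⟩
  have hsc : 0 ≤ 12 * sc := by linarith [hN.four_le]
  have hspokes := mul_le_mul_of_nonneg_left (add_le_add hcard hMone) (mul_nonneg hsc hρ)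
  have hcentres := mul_le_mul_of_nonneg_left hρR
    (mul_nonneg (by linarith : 0 ≤ 24 * sc) (Nat.cast_nonneg (α := ℝ) M.card))
  linarith

lemma IsMinSolution.mWeight_excised_le {r : ℝ} (hF : IsMinSolution N sc ε eulerCase T π F)
    (hN : IsNetHierarchy N sc) (hε : 0 < ε) (hε1 : ε < 1) (hπ : ∀ v, 0 ≤ π v)
    (hG : IsSolution N sc ε eulerCase G)
    (hGb : (mVerts G).Nonempty → (mVerts G ∩ Metric.closedBall u b).Nonempty)
    (hℓ : 0 ≤ ℓ) (hrb : r + ℓ ≤ b) (hR : sc ^ i ≤ ε * (R - b)) (hρ : 0 ≤ ρ) (hρR : ρ ≤ R)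
    (hsep : ∀ x ∈ N i, ∀ y ∈ N i, x ≠ y → 2 * ρ < dist x y)
    (hM : Metric.closedBall u R ⊆ ⋃ c ∈ M, Metric.closedBall c ρ) :
    mWeight (F.filter (Excised u r ℓ R)) ≤ pcCost (T.filter (· ∈ Metric.closedBall u b)) π G +
      (24 * sc * ρ * ((shortCrossing F u r ℓ).card + (longOuter F u r ℓ R).card) +
        48 * sc * R * M.card) := by
  have hRb : 0 < R - b :=
    pos_of_mul_pos_right ((pow_pos (by linarith [hN.one_lt]) i).trans_le hR) hε.le
  have hRr : sc ^ i ≤ ε * (R - r) := hR.trans (mul_le_mul_of_nonneg_left (by linarith) hε.le)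
  obtain ⟨Q, hQ, hYQ, hGQ, hQw⟩ := hN.exists_connector (F := F) (r := r) hε hε1 hℓ (by linarith) hρ
    hρR hsep hM fun h => (hGb h).mono (Set.inter_subset_inter_right _
      (Metric.closedBall_subset_closedBall (by linarith)))
  have hcut := (mVerts_excised_inter_subset_portals hF.netRespecting hN.anti hN.one_lt hε hRr).trans
    hYQ
  have hcover : mVerts (F.filter (Excised u r ℓ R)) ⊆ mVerts Q ∪ Metric.closedBall u b := by
    refine mVerts_excised_subset.trans (Set.union_subset_union (fun v hv => hYQ ?_)
      (Metric.closedBall_subset_closedBall (by linarith)))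
    exact Finset.mem_union_left _ (by simp [hv])
  rw [← Multiset.filter_add_not (Excised u r ℓ R) F] at hF
  exact (hF.mWeight_le_of_exchange hπ hG hQ hcut hcover hGQ).trans (by linarith)

lemma IsMinSolution.mWeight_restrictBall_le_of_cover
    (hF : IsMinSolution N sc ε eulerCase T π F)
    (hN : IsNetHierarchy N sc) (hε : 0 < ε) (hε1 : ε < 1) (hπ : ∀ v, 0 ≤ π v)
    (hG : IsSolution N sc ε eulerCase G)
    (hGb : (mVerts G).Nonempty → (mVerts G ∩ Metric.closedBall u b).Nonempty)
    (hℓ : 0 < ℓ) (hr₀b : r₀ + 2 * ℓ ≤ b) (hR : sc ^ i ≤ ε * (R - b)) (hρ : 0 ≤ ρ) (hρR : ρ ≤ R)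
    (hρℓ : 96 * sc * ρ ≤ ℓ)
    (hsep : ∀ x ∈ N i, ∀ y ∈ N i, x ≠ y → 2 * ρ < dist x y)
    (hM : Metric.closedBall u R ⊆ ⋃ c ∈ M, Metric.closedBall c ρ) :
    mWeight (restrictBall F u r₀) ≤ pcCost (T.filter (· ∈ Metric.closedBall u b)) π G +
      (mWeight (restrictBall F u (r₀ + 2 * ℓ)) - mWeight (restrictBall F u r₀)) / 4 +
        48 * sc * R * M.card := by
  obtain ⟨r, hr, hshort⟩ := exists_card_shortCrossing_mul_le F u r₀ hℓ
  have hexcised := hF.mWeight_excised_le hN hε hε1 hπ hG hGb hℓ.le (r := r) (by linarith [hr.2])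
    hR hρ hρR hsep hM
  have hlong := mWeight_restrictBall_add_card_longOuter_le (r := r) (ℓ := ℓ) (R := R) F u
  have hmono := mWeight_mono (restrictBall_mono F u hr.1)
  have hspokes : 24 * sc * ρ * ((shortCrossing F u r ℓ).card + (longOuter F u r ℓ R).card) ≤
      ℓ / 4 * ((shortCrossing F u r ℓ).card + (longOuter F u r ℓ R).card) :=
    mul_le_mul_of_nonneg_right (by linarith) (by positivity)
  have hlong_nonneg : 0 ≤ (longOuter F u r ℓ R).card * ℓ := by positivity
  linarith

lemma IsMinSolution.mWeight_restrictBall_le_of_doubling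
    (hF : IsMinSolution N sc ε eulerCase T π F) (hX : DoublingDimLE X k)
    (hN : IsNetHierarchy N sc) (hε : 0 < ε) (hε1 : ε < 1) (hπ : ∀ v, 0 ≤ π v)
    (hG : IsSolution N sc ε eulerCase G)
    (hGb : (mVerts G).Nonempty → (mVerts G ∩ Metric.closedBall u b).Nonempty)
    (hℓ : 0 < ℓ) (hr₀b : r₀ + 2 * ℓ ≤ b) (hi : 1 ≤ i) (hR : sc ^ i ≤ ε * (R - b)) (hb : 0 ≤ b)
    (hℓi : ℓ ≤ sc ^ i) :
    mWeight (restrictBall F u r₀) ≤ pcCost (T.filter (· ∈ Metric.closedBall u b)) π G +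
      (mWeight (restrictBall F u (r₀ + 2 * ℓ)) - mWeight (restrictBall F u r₀)) / 4 +
        48 * sc * R * (192 * sc * R) ^ k / ℓ ^ k := by
  have hsc := hN.four_le
  have hpow : 0 < sc ^ i := pow_pos (by linarith) i
  have hRb : 0 < R - b := pos_of_mul_pos_right (hpow.trans_le hR) hε.le
  have hiR : sc ^ i ≤ R := by linarith [mul_le_of_le_one_left hRb.le hε1.le]
  have hρℓ : ℓ / (96 * sc) ≤ ℓ / 2 := div_le_div_of_nonneg_left hℓ.le two_pos (by linarith)
  have hρ : 0 < ℓ / (96 * sc) := by positivity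
  have hsep : ∀ x ∈ N i, ∀ y ∈ N i, x ≠ y → 2 * (ℓ / (96 * sc)) < dist x y := by
    obtain ⟨j, rfl⟩ := Nat.exists_eq_add_of_le' hi
    intro x hx y hy hxy
    linarith [hN.separated j x hx y hy hxy]
  have hRpos : 0 < R := hpow.trans_le hiR
  obtain ⟨M, hMcard, hM⟩ := hX.exists_cover_card_le hρ (show ℓ / (96 * sc) ≤ R by linarith) u
  refine (hF.mWeight_restrictBall_le_of_cover hN hε hε1 hπ hG hGb hℓ hr₀b hR hρ.le (by linarith)
    (mul_div_cancel₀ _ (by positivity)).le hsep hM).trans (add_le_add_right ?_ _)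
  calc 48 * sc * R * M.card ≤ 48 * sc * R * (2 * R / (ℓ / (96 * sc))) ^ k :=
        mul_le_mul_of_nonneg_left hMcard (by positivity)
    _ = 48 * sc * R * (192 * sc * R) ^ k / ℓ ^ k := by
        rw [mul_div_assoc (48 * sc * R), ← div_pow, div_div_eq_mul_div]
        ring_nf

end LocalStep

section Iteration

lemma le_add_of_forall_le_add_sub_div_four {a K : ℕ → ℝ} {c C : ℝ} (haC : ∀ n, a n ≤ C)
    (hK₀ : ∀ n, 0 ≤ K n) (hK : ∀ n, K (n + 1) ≤ 2 * K n)
    (ha : ∀ n, a n ≤ c + (a (n + 1) - a n) / 4 + K n) : a 0 ≤ c + 4 / 3 * K 0 := by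
  have hunroll (n m : ℕ) : a m ≤ c + 4 / 3 * K m + (C - c) / 5 ^ n := by
    induction n generalizing m with
    | zero => linarith [haC m, hK₀ m]
    | succ n ih =>
      rw [pow_succ, ← div_div]
      linarith [ha m, ih (m + 1), hK m]
  have hlim : Filter.Tendsto (fun n : ℕ => c + 4 / 3 * K 0 + (C - c) / 5 ^ n) Filter.atTop
      (nhds (c + 4 / 3 * K 0 + 0)) :=
    ((tendsto_pow_atTop_atTop_of_one_lt (by norm_num)).const_div_atTop (C - c)).const_add _
  simpa only [add_zero] using ge_of_tendsto' hlim fun n => hunroll n 0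

lemma half_le_one_sub_inv_pow {k : ℕ} (hk : 1 ≤ k) : 1 / 2 ≤ (1 - 1 / (2 * k : ℝ)) ^ k := by
  have hk' : (1 : ℝ) ≤ k := by exact_mod_cast hk
  have hsmall : 1 / (2 * k : ℝ) ≤ 1 := by
    rw [div_le_one (by linarith)]
    linarith
  have hbernoulli := one_add_mul_le_pow (a := -(1 / (2 * k : ℝ))) (by linarith) k
  rw [← sub_eq_add_neg] at hbernoulli
  calc (1 / 2 : ℝ) = 1 + k * -(1 / (2 * k)) := by field_simp; norm_num
    _ ≤ _ := hbernoulli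

/-- The shells `[a + S * (1 - q ^ n), a + S * (1 - q ^ (n + 1))]` with `q = 1 - 1 / (2 * k)`
shrink slowly enough for the error term to grow by a factor of at most `2` per step. -/
lemma le_add_of_forall_shell_le {A : ℝ → ℝ} {a S c C D : ℝ} {k : ℕ} (hk : 1 ≤ k) (hS : 0 < S)
    (hD : 0 ≤ D) (hAC : ∀ r, A r ≤ C)
    (hA : ∀ r ℓ, a ≤ r → 0 < ℓ → r + 2 * ℓ ≤ a + S →
      A r ≤ c + (A (r + 2 * ℓ) - A r) / 4 + D / ℓ ^ k) :
    A a ≤ c + 4 / 3 * (D / (S / (4 * k)) ^ k) := by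
  have hk' : (1 : ℝ) ≤ k := by exact_mod_cast hk
  have hqk := half_le_one_sub_inv_pow hk
  set q : ℝ := 1 - 1 / (2 * k) with hq
  have hq0 : 0 < q := by
    rw [hq, sub_pos, div_lt_one (by linarith)]
    linarith
  have hq1 : q ≤ 1 := sub_le_self 1 (by positivity)
  set ℓ : ℕ → ℝ := fun n => S / (4 * k) * q ^ n with hℓ
  set r : ℕ → ℝ := fun n => a + S * (1 - q ^ n) with hr
  have hℓ_pos (n) : 0 < ℓ n := by positivity
  have hr_succ (n) : r (n + 1) = r n + 2 * ℓ n := by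
    simp only [hr, hℓ, pow_succ, hq]
    field_simp
    ring
  have hshell (n) : A (r n) ≤ c + (A (r (n + 1)) - A (r n)) / 4 + D / ℓ n ^ k := by
    have hqn : q ^ n ≤ 1 := pow_le_one₀ hq0.le hq1
    rw [hr_succ]
    refine hA (r n) (ℓ n) ?_ (hℓ_pos n) ?_
    · exact le_add_of_nonneg_right (mul_nonneg hS.le (sub_nonneg.2 hqn))
    · rw [← hr_succ]
      exact add_le_add_right (mul_le_of_le_one_right hS.le
        (sub_le_self 1 (pow_nonneg hq0.le _))) a
  have herror (n) : D / ℓ (n + 1) ^ k ≤ 2 * (D / ℓ n ^ k) := by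
    have hℓ_succ : ℓ (n + 1) ^ k = ℓ n ^ k * q ^ k := by
      simp only [hℓ, ← mul_pow, pow_succ, mul_assoc]
    calc D / ℓ (n + 1) ^ k = D / ℓ n ^ k / q ^ k := by rw [hℓ_succ, div_div]
      _ ≤ D / ℓ n ^ k / (1 / 2) :=
        div_le_div_of_nonneg_left (div_nonneg hD (pow_nonneg (hℓ_pos n).le k)) (by norm_num) hqk
      _ = 2 * (D / ℓ n ^ k) := by ring
  simpa [hr, hℓ] using le_add_of_forall_le_add_sub_div_four (fun n => hAC (r n))
    (fun n => div_nonneg hD (pow_nonneg (hℓ_pos n).le k)) herror hshell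

end Iteration

section Estimate

variable {X : Type*} [MetricSpace X] {N : ℕ → Set X} {sc ε t : ℝ} {eulerCase : Bool}
  {T : Finset X} {π : X → ℝ} {F G : Multiset (Sym2 X)} {i k : ℕ}

lemma IsSolution.exists_meeting (hG : IsSolution N sc ε eulerCase G) {B : Set X}
    (hT : ∀ v ∈ T, v ∈ B) : ∃ G', IsSolution N sc ε eulerCase G' ∧
      pcCost T π G' ≤ pcCost T π G ∧ ((mVerts G').Nonempty → (mVerts G' ∩ B).Nonempty) := by
  by_cases h : (mVerts G ∩ B).Nonempty
  · exact ⟨G, hG, le_rfl, fun _ => h⟩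
  refine ⟨0, .zero, ?_, by simp⟩
  have huncovered : T.filter (· ∉ mVerts G) = T :=
    Finset.filter_true_of_mem fun v hv hvG => h ⟨v, hvG, hT v hv⟩
  simp [pcCost, huncovered, mWeight_nonneg]

lemma shell_error_le {S : ℝ} (hk : 1 ≤ k) (hsc : 0 ≤ sc) (hε : 0 < ε) (ht : 0 ≤ t) (hS : 0 < S) :
    4 / 3 * (48 * sc * (3 * t * S / ε) * (192 * sc * (3 * t * S / ε)) ^ k / (S / (4 * k)) ^ k) ≤
      (2304 * sc * k * t / ε) ^ (k + 1) * S := by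
  have hk' : (1 : ℝ) ≤ k := by exact_mod_cast hk
  have hratio : 192 * sc * (3 * t * S / ε) / (S / (4 * k)) = 2304 * sc * k * t / ε := by
    field_simp
    ring
  calc _ = (2304 * sc * k * t / ε) ^ k * (192 * sc * t / ε) * S := by
        rw [mul_div_assoc, ← div_pow, hratio]
        ring
    _ ≤ (2304 * sc * k * t / ε) ^ k * (2304 * sc * k * t / ε) * S := by
        gcongr _ * (?_ * _ / _) * _
        linarith [le_mul_of_one_le_right (by positivity : 0 ≤ 2304 * sc) hk']
    _ = _ := by rw [pow_succ]

theorem local_sparsity_estimator_general (hX : DoublingDimLE X k) (hN : IsNetHierarchy N sc)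
    (hε : 0 < ε) (hε1 : ε < 1) (hπ : ∀ v, 0 ≤ π v) (hF : IsMinSolution N sc ε eulerCase T π F)
    (hi : 1 ≤ i) (u : X) (ht : 1 ≤ t) (hG : IsSolution N sc ε eulerCase G) :
    mWeight (restrictBall F u (t * sc ^ i)) ≤
      pcCost (T.filter (· ∈ Metric.closedBall u ((t + 1) * sc ^ i))) π G +
        (2304 * sc * k * t / ε) ^ (k + 1) * sc ^ i := by
  have hsc := hN.four_le
  have hS : 0 < sc ^ i := pow_pos (by linarith) i
  obtain rfl | hk := k.eq_zero_or_pos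
  · have := hX.subsingleton
    rw [mWeight_eq_zero_of_subsingleton]
    simpa using pcCost_nonneg hπ G
  obtain ⟨G', hG', hcost, hmeets⟩ := hG.exists_meeting (π := π)
    (T := T.filter (· ∈ Metric.closedBall u ((t + 1) * sc ^ i))) fun v hv =>
      (Finset.mem_filter.1 hv).2
  have hR : sc ^ i ≤ ε * (3 * t * sc ^ i / ε - (t + 1) * sc ^ i) := by
    rw [mul_sub, mul_div_cancel₀ _ hε.ne']
    have hscaled := mul_le_of_le_one_left (by positivity : 0 ≤ (t + 1) * sc ^ i) hε1.le
    linarith [le_mul_of_one_le_left hS.le ht]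
  have hiterate := le_add_of_forall_shell_le (A := fun r => mWeight (restrictBall F u r))
    (a := t * sc ^ i) hk hS (by positivity) (fun r => mWeight_mono (Multiset.filter_le _ F))
    fun r ℓ hr hℓ hrℓ => hF.mWeight_restrictBall_le_of_doubling hX hN hε hε1 hπ hG' hmeets hℓ
      (by linarith) hi hR (by positivity) (by linarith)
  exact hiterate.trans
    (add_le_add hcost (shell_error_le hk (by linarith) hε (by linarith) hS))

lemma pow_succ_le_rpow (hsc : 1 ≤ sc) (hε : 0 < ε) (hε1 : ε ≤ 1) (ht : 1 ≤ t) (k : ℕ) :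
    (2304 * sc * k * t / ε) ^ (k + 1) ≤ (2304 * sc * k * t / ε) ^ (2304 * k : ℝ) := by
  obtain rfl | hk := k.eq_zero_or_pos
  · simp
  have hk' : (1 : ℝ) ≤ k := by exact_mod_cast hk
  have hbase : 1 ≤ 2304 * sc * k * t / ε := by
    rw [one_le_div hε]
    calc ε ≤ 1 * 1 * 1 := by linarith
      _ ≤ 2304 * sc * k * t := by gcongr; linarith
  rw [← Real.rpow_natCast]
  refine Real.rpow_le_rpow_of_exponent_le hbase ?_
  push_cast
  linarith

end Estimate

/-- **Local sparsity estimator.** There is a universal constant `C > 0` such that for any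
metric space of doubling dimension at most `k` with hierarchical nets `N` (parameter
`s ≥ 4`, net-respecting parameter `ε ∈ (0,1)`), any prize-collecting instance `(T,π)`,
and any minimum-cost net-respecting solution `F` (a connected multigraph, additionally
Eulerian in the PCTSP case), for every `i ∈ [L]`, `u ∈ N i`, `t ≥ 1` and every
net-respecting feasible solution `G` of the sub-instance with terminal set
`T ∩ B(u,(t+1)s^i)`, one has
`w(F|_{B(u,t·s^i)}) ≤ c_{W_u^{(i,t+1)}}(G) + (C·s·k·t/ε)^{C·k} · s^i`. -/
theorem local_sparsity_estimator : ∃ C : ℝ, 0 < C ∧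
    ∀ (X : Type) [MetricSpace X], ∀ (k L : ℕ),
    (∀ x : X, ∀ ρ : ℝ, 0 < ρ → ∃ Cs : Finset X, Cs.card ≤ 2 ^ k ∧
      Metric.closedBall x (2 * ρ) ⊆ ⋃ c ∈ Cs, Metric.closedBall c ρ) →
    ∀ (N : ℕ → Set X) (sc ε : ℝ), 4 ≤ sc → 0 < ε → ε < 1 →
    N 0 = Set.univ → (∀ i : ℕ, N (i + 1) ⊆ N i) →
    (∀ i : ℕ, ∀ a ∈ N (i + 1), ∀ b ∈ N (i + 1), a ≠ b → sc ^ (i + 1) < dist a b) →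
    (∀ i : ℕ, ∀ x ∈ N i, ∃ y ∈ N (i + 1), dist x y ≤ sc ^ (i + 1)) →
    ∀ (T : Finset X) (π : X → ℝ), (∀ v, 0 ≤ π v) →
    -- `eulerCase` distinguishes PCTSP (solutions must in addition be Eulerian)
    -- from PCSTP (solutions are connected multigraphs).
    ∀ (eulerCase : Bool) (F : Multiset (Sym2 X)),
      MConnected F → (eulerCase = true → MEulerian F) → MNetRespecting N sc ε F →
      (∀ F' : Multiset (Sym2 X), MConnected F' → (eulerCase = true → MEulerian F') →
        MNetRespecting N sc ε F' → pcCost T π F ≤ pcCost T π F') →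
    ∀ i : ℕ, 1 ≤ i → i ≤ L → ∀ u ∈ N i, ∀ t : ℝ, 1 ≤ t →
    ∀ G : Multiset (Sym2 X), MConnected G → (eulerCase = true → MEulerian G) →
      MNetRespecting N sc ε G →
      mWeight (restrictBall F u (t * sc ^ i)) ≤
        pcCost (T.filter (fun v => v ∈ Metric.closedBall u ((t + 1) * sc ^ i))) π G +
          (C * sc * (k : ℝ) * t / ε) ^ (C * (k : ℝ)) * sc ^ i := by
  refine ⟨2304, by norm_num, ?_⟩
  intro X _ k L hX N sc ε hsc hε hε1 hN₀ hanti hsep hcov T π hπ eulerCase F hFconn hFeuler hFnet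
    hmin i hi _ u _ t ht G hGconn hGeuler hGnet
  have hN : IsNetHierarchy N sc := ⟨hsc, hN₀, antitone_nat_of_succ_le hanti, hsep, hcov⟩
  have hF : IsMinSolution N sc ε eulerCase T π F :=
    ⟨⟨⟨hFconn, hFnet⟩, hFeuler⟩, fun F' hF' =>
      hmin F' hF'.connected hF'.eulerian hF'.netRespecting⟩
  refine (local_sparsity_estimator_general hX hN hε hε1 hπ hF hi u ht
    ⟨⟨hGconn, hGnet⟩, hGeuler⟩).trans ?_
  gcongr
  exact pow_succ_le_rpow hN.one_lt.le hε hε1.le ht k
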